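/- Let 1 ≤ m ≤ d and let f : [0,1]^d → ℝ^m be a non-constant C¹ function. Set γ = 2 + 4·d^{d+1/2}·(d+1)⁴ and β_f(δ) = ω_{Df}(√d·δ)·(1 + √d·δ + 4·d^{d+1/2}·(d+1)⁴). Then for every ε > 0 small enough that β_f^{−1}(ε) ≤ 1/√d, one has N_f(ε) ≤ d^{3/2}·2^{3d−1}·d! · (1/Ψ_{Df}(ε/γ)). -/

import Mathlib

open MeasureTheory Set Topology
open scoped ENNReal

noncomputable section

abbrev E (n : ℕ) : Type := EuclideanSpace ℝ (Fin n)

def unitCube (d : ℕ) : Set (E d) := {x | ∀ i, x i ∈ Set.Icc (0:ℝ) 1}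

def openCube (d : ℕ) : Set (E d) := {x | ∀ i, x i ∈ Set.Ioo (0:ℝ) 1}

/-- Jacobian matrix of `f` at `x`. -/
def jac {d m : ℕ} (f : E d → E m) (x : E d) : Matrix (Fin m) (Fin d) ℝ :=
  Matrix.of fun i j => fderiv ℝ f x (EuclideanSpace.single j 1) i

/-- Critical set of `g` in the open unit cube. -/
def critSet {d m : ℕ} (g : E d → E m) : Set (E d) :=
  {x ∈ openCube d | (jac g x).rank ≤ m - 1}

/-- `N_f(ε)`. -/
def Nf {d m : ℕ} (f : E d → E m) (ε : ℝ) : ℝ≥0∞ :=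
  sInf { h : ℝ≥0∞ | ∃ g : E d → E m, ContDiff ℝ 1 g ∧
    (∀ x ∈ unitCube d, ‖g x - f x‖ ≤ ε ∧ ‖fderiv ℝ g x - fderiv ℝ f x‖ ≤ ε) ∧
    h = μH[(d:ℝ) - 1] (critSet g) }

/-- minimal modulus of continuity of `Df` on `U`. -/
def omegaC1 {d m : ℕ} (f : E d → E m) (U : Set (E d)) (δ : ℝ) : ℝ :=
  sSup {r : ℝ | ∃ x ∈ U, ∃ y ∈ U, ‖x - y‖ ≤ δ ∧ r = ‖fderiv ℝ f x - fderiv ℝ f y‖}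

def betaf {d m : ℕ} (f : E d → E m) (δ : ℝ) : ℝ :=
  omegaC1 f (unitCube d) (Real.sqrt d * δ) *
    (1 + Real.sqrt d * δ + 4 * (d:ℝ) ^ ((d:ℝ) + 1/2) * ((d:ℝ)+1)^4)

end

noncomputable section

/-- Inverse of the minimal modulus of continuity of `h` on `U`:
`Ψ_h(s) = sup{δ ≥ 0 : |h(x)−h(y)| ≤ s whenever x,y ∈ U, |x−y| ≤ δ}`
(taking the supremum in `[0,∞]`). -/
def PsiInv {X Y : Type*} [PseudoEMetricSpace X] [PseudoMetricSpace Y]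
    (h : X → Y) (U : Set X) (s : ℝ) : ℝ≥0∞ :=
  sSup {δ : ℝ≥0∞ | ∀ x ∈ U, ∀ y ∈ U, edist x y ≤ δ → dist (h x) (h y) ≤ s}

/-!
Averaging `f` over small homothetic copies of the cube replaces it by a map `g` whose derivative is
within `s` of `Df` and is Lipschitz with constant of order `s / r`, where `s` bounds the oscillation
of `Df` at scale `r`. Now add to `g` a linear map `A` with independent entries, uniform on `[0, a]`
with `a` of order `s`. A grid cell of side `1 / n` meets the critical set of `g + A` only if `A`
plus the Jacobian of `g` at a corner of the cell lies within `O(s / (r n))` of a rank-deficient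
matrix, which has probability `O(s / (r a n)) = O(1 / (r n))`. Hence the expected sum of
`diam ^ (d - 1)` over these cells is `O(n ^ d * n ^ (1 - d) / (r n)) = O(1 / r)` uniformly in `n`,
and Fatou's lemma provides one matrix `A` for which the critical set has measure `O(1 / r)`.
-/

section

open Filter ProbabilityTheory WithLp
open scoped Matrix

section Probability

variable {ι : Type*} [Fintype ι]

lemma measurePreserving_update_pi [DecidableEq ι] {X : ι → Type*} [∀ i, MeasurableSpace (X i)]
    (μ : ∀ i, Measure (X i)) [∀ i, IsProbabilityMeasure (μ i)] (i : ι) :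
    MeasurePreserving (fun p : (∀ j, X j) × X i ↦ Function.update p.1 i p.2)
      ((Measure.pi μ).prod (μ i)) (Measure.pi μ) := by
  have hmeas : Measurable fun p : (∀ j, X j) × X i ↦ Function.update p.1 i p.2 :=
    measurable_update'
  refine ⟨hmeas, (Measure.pi_eq fun s hs ↦ ?_).symm⟩
  have hpre : (fun p : (∀ j, X j) × X i ↦ Function.update p.1 i p.2) ⁻¹' univ.pi s
      = univ.pi (Function.update s i univ) ×ˢ s i := by
    ext p
    simp only [mem_preimage, mem_univ_pi, mem_prod]
    rw [← and_forall_ne i, ← and_forall_ne (p := fun j ↦ p.1 j ∈ Function.update s i univ j) i]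
    simp +contextual [and_comm]
  rw [Measure.map_apply hmeas (.univ_pi hs), hpre, Measure.prod_prod, Measure.pi_pi,
    ← Finset.mul_prod_erase _ _ (Finset.mem_univ i),
    ← Finset.mul_prod_erase _ _ (Finset.mem_univ i), Function.update_self, measure_univ, one_mul,
    mul_comm]
  congr 1
  exact Finset.prod_congr rfl fun j hj ↦ by
    rw [Function.update_of_ne (Finset.ne_of_mem_erase hj)]

lemma measure_pi_le_of_forall_update_le [DecidableEq ι] {X : ι → Type*}
    [∀ i, MeasurableSpace (X i)] (μ : ∀ i, Measure (X i)) [∀ i, IsProbabilityMeasure (μ i)]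
    (i : ι) {B : Set (∀ j, X j)} (hB : MeasurableSet B) {c : ℝ≥0∞}
    (h : ∀ x, μ i {t | Function.update x i t ∈ B} ≤ c) : Measure.pi μ B ≤ c := by
  have hmp := measurePreserving_update_pi μ i
  rw [← hmp.measure_preimage hB.nullMeasurableSet, Measure.prod_apply (hmp.measurable hB)]
  calc _ ≤ ∫⁻ _x, c ∂Measure.pi μ := lintegral_mono h
    _ = c := by simp

lemma exists_liminf_le_of_lintegral_le {Ω : Type*} [MeasurableSpace Ω] {μ : Measure Ω}
    [IsProbabilityMeasure μ] {F : ℕ → Ω → ℝ≥0∞} (hF : ∀ n, Measurable (F n)) {C : ℝ≥0∞}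
    (hC : ∀ n, ∫⁻ ω, F n ω ∂μ ≤ C) {p : Ω → Prop} (hp : ∀ᵐ ω ∂μ, p ω) :
    ∃ ω, p ω ∧ liminf (fun n ↦ F n ω) atTop ≤ C := by
  obtain ⟨ω, hω, hle⟩ := exists_notMem_null_le_lintegral (Measurable.liminf hF).aemeasurable hp
  refine ⟨ω, by simpa using hω, hle.trans ?_⟩
  calc _ ≤ liminf (fun n ↦ ∫⁻ ω, F n ω ∂μ) atTop := lintegral_liminf_le hF
    _ ≤ liminf (fun _ : ℕ ↦ C) atTop := liminf_le_liminf (.of_forall hC)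
    _ = C := liminf_const C

/-- The uniform probability measure on the cube `[0, a]^ι`. It serves both as the mollifier and as
the law of the entries of a random matrix. -/
def unifBox (ι : Type*) [Fintype ι] (a : ℝ) : Measure (ι → ℝ) :=
  Measure.pi fun _ ↦ volume[|Icc 0 a]

lemma isProbabilityMeasure_cond_Icc {a : ℝ} (ha : 0 < a) :
    IsProbabilityMeasure (volume[|Icc 0 a] : Measure ℝ) :=
  cond_isProbabilityMeasure_of_finite (by simp [ha]) (by simp)

lemma isProbabilityMeasure_unifBox {a : ℝ} (ha : 0 < a) : IsProbabilityMeasure (unifBox ι a) :=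
  have := isProbabilityMeasure_cond_Icc ha
  inferInstanceAs (IsProbabilityMeasure (Measure.pi _))

lemma ae_unifBox_mem (a : ℝ) : ∀ᵐ u ∂unifBox ι a, u ∈ Icc 0 fun _ ↦ a := by
  have h : ∀ᵐ u ∂unifBox ι a, ∀ i, u i ∈ Icc 0 a :=
    ae_all_iff.2 fun i ↦ Measure.tendsto_eval_ae_ae.eventually (ae_cond_mem measurableSet_Icc)
  exact h.mono fun u hu ↦ ⟨fun i ↦ (hu i).1, fun i ↦ (hu i).2⟩

lemma cond_Icc_le {a δ : ℝ} (ha : 0 < a) {S : Set ℝ}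
    (hS : ∀ t ∈ S, ∀ t' ∈ S, |t - t'| ≤ δ) :
    volume[|Icc 0 a] S ≤ ENNReal.ofReal (δ / a) := by
  have hvol : volume S ≤ ENNReal.ofReal δ :=
    (Real.volume_le_diam S).trans <| Metric.ediam_le fun t ht t' ht' ↦ by
      rw [edist_dist, Real.dist_eq]
      exact ENNReal.ofReal_le_ofReal (hS t ht t' ht')
  calc volume[|Icc 0 a] S
      = (ENNReal.ofReal a)⁻¹ * volume (Icc 0 a ∩ S) := by
        rw [cond_apply measurableSet_Icc, Real.volume_Icc, sub_zero]
    _ ≤ (ENNReal.ofReal a)⁻¹ * ENNReal.ofReal δ := by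
        gcongr
        exact (measure_mono inter_subset_right).trans hvol
    _ = ENNReal.ofReal (δ / a) := by
        rw [ENNReal.ofReal_div_of_pos ha, div_eq_mul_inv, mul_comm]

end Probability

section NearSingular

variable {ι κ : Type*} [Fintype ι] [Fintype κ]

/-- The matrices `M` for which some row vector `c` and some column vector `n` of sup norm one,
attaining it at `i` and at `j` with value `1`, satisfy `|c M| ≤ b` entrywise while `M n` vanishes
off row `i`. A matrix close to a row-rank-deficient one is of this kind for some `i` and `j`; fixing
the vectors this way confines the entry `M i j` to an interval once the others are given. -/
def nearSingular (b : ℝ) (i : ι) (j : κ) : Set (Matrix ι κ ℝ) :=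
  {M | ∃ c ∈ Icc (-1) (1 : ι → ℝ), ∃ n ∈ Icc (-1) (1 : κ → ℝ), c i = 1 ∧ n j = 1 ∧
    (∀ l, |(c ᵥ* M) l| ≤ b) ∧ ∀ k ≠ i, (M *ᵥ n) k = 0}

lemma isClosed_nearSingular (b : ℝ) (i : ι) (j : κ) : IsClosed (nearSingular b i j) := by
  let K : Set ((ι → ℝ) × (κ → ℝ)) := Icc (-1) 1 ×ˢ Icc (-1) 1
  have : CompactSpace K := isCompact_iff_compactSpace.1 (isCompact_Icc.prod isCompact_Icc)
  let C : Set (K × Matrix ι κ ℝ) := {q | q.1.1.1 i = 1 ∧ q.1.1.2 j = 1 ∧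
    (∀ l, |(q.1.1.1 ᵥ* q.2) l| ≤ b) ∧ ∀ k ≠ i, (q.2 *ᵥ q.1.1.2) k = 0}
  have hC : IsClosed C := by
    simp only [C, ofPred_and, ofPred_forall]
    refine .inter ?_ (.inter ?_ (.inter ?_ ?_))
    · exact isClosed_eq (by fun_prop) (by fun_prop)
    · exact isClosed_eq (by fun_prop) (by fun_prop)
    · exact isClosed_iInter fun l ↦ isClosed_le (by fun_prop) (by fun_prop)
    · exact isClosed_iInter fun k ↦ isClosed_iInter fun _ ↦ isClosed_eq (by fun_prop) (by fun_prop)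
  convert! isClosedMap_snd_of_compactSpace C hC
  ext M
  constructor
  · rintro ⟨c, hc, n, hn, h⟩
    exact ⟨(⟨(c, n), hc, hn⟩, M), h, rfl⟩
  · rintro ⟨⟨⟨⟨c, n⟩, hc, hn⟩, M⟩, h, rfl⟩
    exact ⟨c, hc, n, hn, h⟩

lemma abs_dotProduct_le {u v : κ → ℝ} {b : ℝ} (hu : u ∈ Icc (-1) 1) (hv : ∀ l, |v l| ≤ b) :
    |v ⬝ᵥ u| ≤ Fintype.card κ * b := by
  calc |v ⬝ᵥ u| ≤ ∑ l, |v l * u l| := Finset.abs_sum_le_sum_abs _ _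
    _ ≤ ∑ _l : κ, b := by
        gcongr with l
        rw [abs_mul]
        exact (mul_le_of_le_one_right (abs_nonneg _) (abs_le.2 ⟨hu.1 l, hu.2 l⟩)).trans (hv l)
    _ = Fintype.card κ * b := by simp

/-- With `c` taken from `M` and `n` from `N`, the number `c M n` reduces to `(M n) i`, which differs
from `(N n) i` by exactly `M i j - N i j`. -/
lemma abs_entry_sub_le_of_mem_nearSingular {b : ℝ} {i : ι} {j : κ} {M N : Matrix ι κ ℝ}
    (hM : M ∈ nearSingular b i j) (hN : N ∈ nearSingular b i j)
    (hMN : ∀ k l, (k, l) ≠ (i, j) → M k l = N k l) :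
    |M i j - N i j| ≤ 2 * Fintype.card κ * b := by
  obtain ⟨c, -, -, -, hci, -, hc, -⟩ := hM
  obtain ⟨c', -, n, hn, hc'i, hnj, hc', hnN⟩ := hN
  have row_eq : ∀ {c : ι → ℝ} {Q : Matrix ι κ ℝ}, c i = 1 → (∀ k ≠ i, (Q *ᵥ n) k = 0) →
      (c ᵥ* Q) ⬝ᵥ n = (Q *ᵥ n) i := fun {c Q} hci hQ ↦ by
    rw [← Matrix.dotProduct_mulVec, dotProduct,
      Finset.sum_eq_single i (fun k _ hk ↦ by rw [hQ k hk, mul_zero]) (by simp), hci, one_mul]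
  have hnM : ∀ k ≠ i, (M *ᵥ n) k = 0 := fun k hk ↦ by
    rw [← hnN k hk]
    exact Finset.sum_congr rfl fun l _ ↦ congrArg (· * n l) (hMN k l (by simp [hk]))
  have hdiff : (M *ᵥ n) i - (N *ᵥ n) i = M i j - N i j := by
    rw [← Pi.sub_apply, ← Matrix.sub_mulVec, Matrix.mulVec, dotProduct,
      Finset.sum_eq_single j (fun l _ hl ↦ by simp [hMN i l (by simp [hl])]) (by simp), hnj,
      mul_one, Matrix.sub_apply]
  have hMb := abs_dotProduct_le hn hc
  have hNb := abs_dotProduct_le hn hc'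
  rw [row_eq hci hnM] at hMb
  rw [row_eq hc'i hnN] at hNb
  calc |M i j - N i j| ≤ |(M *ᵥ n) i| + |(N *ᵥ n) i| := hdiff ▸ abs_sub _ _
    _ ≤ 2 * Fintype.card κ * b := by linarith

lemma exists_smul_mem_Icc_apply_eq_one {ι : Type*} [Finite ι] {v : ι → ℝ} (hv : v ≠ 0) :
    ∃ (a : ℝ) (i : ι), a • v ∈ Icc (-1) (1 : ι → ℝ) ∧ (a • v) i = 1 := by
  obtain ⟨i₀, hi₀⟩ := Function.ne_iff.1 hv
  have : Nonempty ι := ⟨i₀⟩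
  obtain ⟨i, hi⟩ := Finite.exists_max fun k ↦ |v k|
  have hpos : 0 < |v i| := (abs_pos.2 hi₀).trans_le (hi i₀)
  have hle : ∀ k, |(v i)⁻¹ * v k| ≤ 1 := fun k ↦ by
    rw [abs_mul, abs_inv, inv_mul_le_one₀ hpos]
    exact hi k
  exact ⟨(v i)⁻¹, i, ⟨fun k ↦ (abs_le.1 (hle k)).1, fun k ↦ (abs_le.1 (hle k)).2⟩,
    inv_mul_cancel₀ (abs_pos.1 hpos)⟩

lemma exists_vecMul_eq_zero_of_rank_lt {M : Matrix ι κ ℝ} (h : M.rank < Fintype.card ι) :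
    ∃ c ≠ 0, c ᵥ* M = 0 := by
  by_contra! hinj
  refine h.ne (LinearIndependent.rank_matrix (Matrix.vecMul_injective_iff.1 ?_))
  exact (injective_iff_map_eq_zero M.vecMulLinear).2 fun c hc ↦
    by_contra fun hc0 ↦ hinj c hc0 hc

lemma exists_mulVec_eq_zero_off_row (h : Fintype.card ι ≤ Fintype.card κ) (M : Matrix ι κ ℝ)
    (i : ι) : ∃ n ≠ 0, ∀ k ≠ i, (M *ᵥ n) k = 0 := by
  classical
  let T : (κ → ℝ) →ₗ[ℝ] ({k // k ≠ i} → ℝ) := (M.submatrix Subtype.val id).mulVecLin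
  have hlt : Module.finrank ℝ ({k // k ≠ i} → ℝ) < Module.finrank ℝ (κ → ℝ) := by
    have := Fintype.card_pos_iff.2 ⟨i⟩
    simp only [Module.finrank_fintype_fun_eq_card, ne_eq, Fintype.card_subtype_compl,
      Fintype.card_unique]
    omega
  obtain ⟨n, hn, hn0⟩ :=
    Submodule.exists_mem_ne_zero_of_ne_bot (LinearMap.ker_ne_bot_of_finrank_lt (f := T) hlt)
  exact ⟨n, hn0, fun k hk ↦ congrFun (LinearMap.mem_ker.1 hn) ⟨k, hk⟩⟩

lemma exists_mem_nearSingular_of_rank_lt (hcard : Fintype.card ι ≤ Fintype.card κ)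
    {M N : Matrix ι κ ℝ} (hN : N.rank < Fintype.card ι) {η : ℝ}
    (hMN : ∀ k l, |M k l - N k l| ≤ η) :
    ∃ i j, M ∈ nearSingular (Fintype.card ι * η) i j := by
  obtain ⟨c, hc0, hc⟩ := exists_vecMul_eq_zero_of_rank_lt hN
  obtain ⟨a, i, haI, hai⟩ := exists_smul_mem_Icc_apply_eq_one hc0
  obtain ⟨n, hn0, hn⟩ := exists_mulVec_eq_zero_off_row hcard M i
  obtain ⟨a', j, haI', haj⟩ := exists_smul_mem_Icc_apply_eq_one hn0
  refine ⟨i, j, a • c, haI, a' • n, haI', hai, haj, fun l ↦ ?_, fun k hk ↦ ?_⟩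
  · have hsub : ((a • c) ᵥ* M) l = (fun k ↦ M k l - N k l) ⬝ᵥ (a • c) := by
      have hN0 : ((a • c) ᵥ* N) l = 0 := by rw [Matrix.smul_vecMul, hc, smul_zero, Pi.zero_apply]
      rw [← sub_zero (((a • c) ᵥ* M) l), ← hN0, ← Pi.sub_apply, ← Matrix.vecMul_sub,
        dotProduct_comm]
      rfl
    rw [hsub]
    exact abs_dotProduct_le haI fun k ↦ hMN k l
  · rw [Matrix.mulVec_smul, Pi.smul_apply, hn k hk, smul_zero]

end NearSingular

section RandomMatrix

variable {ι κ : Type*} [Fintype ι] [Fintype κ]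

/-- The arrays `A` for which `R + A` belongs to some `nearSingular b i j`. -/
def nearSingularShifts (R : Matrix ι κ ℝ) (b : ℝ) : Set (ι × κ → ℝ) :=
  {A | ∃ i j, R + Matrix.of (Function.curry A) ∈ nearSingular b i j}

lemma isClosed_shift_preimage_nearSingular (R : Matrix ι κ ℝ) (b : ℝ) (i : ι) (j : κ) :
    IsClosed {A : ι × κ → ℝ | R + Matrix.of (Function.curry A) ∈ nearSingular b i j} := by
  have hcont : Continuous fun A : ι × κ → ℝ ↦ R + Matrix.of (Function.curry A) :=
    continuous_const.add (continuous_matrix fun k l ↦ continuous_apply (k, l))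
  exact (isClosed_nearSingular b i j).preimage hcont

lemma nearSingularShifts_eq_iUnion (R : Matrix ι κ ℝ) (b : ℝ) :
    nearSingularShifts R b =
      ⋃ i, ⋃ j, {A | R + Matrix.of (Function.curry A) ∈ nearSingular b i j} := by
  simp only [nearSingularShifts, ofPred_exists]

lemma measurableSet_nearSingularShifts (R : Matrix ι κ ℝ) (b : ℝ) :
    MeasurableSet (nearSingularShifts R b) := by
  rw [nearSingularShifts_eq_iUnion]
  exact .iUnion fun i ↦ .iUnion fun j ↦
    (isClosed_shift_preimage_nearSingular R b i j).measurableSet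

lemma unifBox_shift_mem_nearSingular_le {a : ℝ} (ha : 0 < a) (R : Matrix ι κ ℝ) (b : ℝ)
    (i : ι) (j : κ) :
    unifBox (ι × κ) a {A | R + Matrix.of (Function.curry A) ∈ nearSingular b i j} ≤
      ENNReal.ofReal (2 * Fintype.card κ * b / a) := by
  classical
  have := isProbabilityMeasure_cond_Icc ha
  refine measure_pi_le_of_forall_update_le _ (i, j)
    (isClosed_shift_preimage_nearSingular R b i j).measurableSet fun A ↦
    cond_Icc_le ha fun t ht t' ht' ↦ ?_
  have hclose := abs_entry_sub_le_of_mem_nearSingular ht ht' fun k l hkl ↦ by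
    simp [Function.curry, Function.update_of_ne hkl]
  simpa [Function.curry] using hclose

lemma unifBox_nearSingularShifts_le {a : ℝ} (ha : 0 < a) (R : Matrix ι κ ℝ) (b : ℝ) :
    unifBox (ι × κ) a (nearSingularShifts R b) ≤
      ENNReal.ofReal (Fintype.card ι * Fintype.card κ * (2 * Fintype.card κ * b / a)) := by
  calc unifBox (ι × κ) a (nearSingularShifts R b)
      ≤ ∑ i : ι, ∑ j : κ,
          unifBox (ι × κ) a {A | R + Matrix.of (Function.curry A) ∈ nearSingular b i j} := by
        rw [nearSingularShifts_eq_iUnion]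
        exact (measure_iUnion_fintype_le _ _).trans
          (Finset.sum_le_sum fun i _ ↦ measure_iUnion_fintype_le _ _)
    _ ≤ ∑ _i : ι, ∑ _j : κ, ENNReal.ofReal (2 * Fintype.card κ * b / a) := by
        gcongr with i _ j
        exact unifBox_shift_mem_nearSingular_le ha R b i j
    _ = ENNReal.ofReal (Fintype.card ι * Fintype.card κ * (2 * Fintype.card κ * b / a)) := by
        rw [ENNReal.ofReal_mul (by positivity), ENNReal.ofReal_mul (by positivity)]
        simp [mul_assoc]

end RandomMatrix

section Grid

variable {d : ℕ}

lemma openCube_subset_unitCube : openCube d ⊆ unitCube d :=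
  fun _ hx i ↦ Ioo_subset_Icc_self (hx i)

lemma norm_le_sqrt_card_mul {ι : Type*} [Fintype ι] {x : EuclideanSpace ℝ ι} {c : ℝ} (hc : 0 ≤ c)
    (h : ∀ i, |x i| ≤ c) : ‖x‖ ≤ √(Fintype.card ι) * c := by
  rw [EuclideanSpace.norm_eq, ← Real.sqrt_sq hc, ← Real.sqrt_mul (Nat.cast_nonneg _)]
  refine Real.sqrt_le_sqrt ?_
  calc ∑ i, ‖x i‖ ^ 2 ≤ ∑ _i : ι, c ^ 2 := by
        gcongr with i
        exact h i
    _ = Fintype.card ι * c ^ 2 := by simp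

/-- The lowest corner of the cell with index `q` in the division of the unit cube into `(n + 1) ^ d`
cubes of side `1 / (n + 1)`. -/
def gridPoint (n : ℕ) (q : Fin d → Fin (n + 1)) : E d :=
  toLp 2 fun i ↦ (q i : ℝ) / (n + 1)

/-- The closed cube of side `1 / (n + 1)` with lowest corner `gridPoint n q`. -/
def gridCell (n : ℕ) (q : Fin d → Fin (n + 1)) : Set (E d) :=
  {x | ∀ i, x i ∈ Icc (gridPoint n q i) (gridPoint n q i + 1 / (n + 1))}

lemma gridPoint_mem_unitCube (n : ℕ) (q : Fin d → Fin (n + 1)) : gridPoint n q ∈ unitCube d := by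
  intro i
  have hle : ((q i : ℕ) : ℝ) ≤ n := mod_cast Nat.lt_succ_iff.1 (q i).2
  exact ⟨by simp only [gridPoint]; positivity,
    (div_le_one (by positivity)).2 (hle.trans (lt_add_one _).le)⟩

lemma openCube_subset_iUnion_gridCell (n : ℕ) : openCube d ⊆ ⋃ q, gridCell n q := by
  intro x hx
  have hn : (0 : ℝ) < n + 1 := by positivity
  have hpos : ∀ i, 0 ≤ (n + 1) * x i := fun i ↦ mul_nonneg hn.le (hx i).1.le
  have hlt : ∀ i, ⌊(n + 1) * x i⌋₊ < n + 1 := fun i ↦ by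
    rw [Nat.floor_lt (hpos i)]
    push_cast
    nlinarith [(hx i).2]
  refine mem_iUnion.2 ⟨fun i ↦ ⟨⌊(n + 1) * x i⌋₊, hlt i⟩, fun i ↦ ⟨?_, ?_⟩⟩
  · exact (div_le_iff₀' hn).2 (Nat.floor_le (hpos i))
  · rw [gridPoint, ← add_div, le_div_iff₀' hn]
    exact (Nat.lt_floor_add_one _).le

lemma ediam_gridCell_le (n : ℕ) (q : Fin d → Fin (n + 1)) :
    Metric.ediam (gridCell n q) ≤ ENNReal.ofReal (√d / (n + 1)) := by
  refine Metric.ediam_le fun x hx y hy ↦ ?_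
  rw [edist_dist, dist_eq_norm]
  refine ENNReal.ofReal_le_ofReal ?_
  have hcoord : ∀ i, |(x - y) i| ≤ 1 / (n + 1) := fun i ↦
    (abs_sub_le_of_le_of_le (hx i).1 (hx i).2 (hy i).1 (hy i).2).trans (by simp)
  simpa [div_eq_mul_inv] using norm_le_sqrt_card_mul (by positivity) hcoord

lemma sum_abs_gridPoint_sub_le {n : ℕ} {q : Fin d → Fin (n + 1)} {x : E d}
    (hx : x ∈ gridCell n q) : ∑ i, |gridPoint n q i - x i| ≤ d / (n + 1) := by
  calc ∑ i, |gridPoint n q i - x i| ≤ ∑ _i : Fin d, 1 / ((n : ℝ) + 1) := by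
        gcongr with i
        rw [abs_sub_comm, abs_of_nonneg (sub_nonneg.2 (hx i).1)]
        linarith [(hx i).2]
    _ = d / (n + 1) := by simp [div_eq_mul_inv]

lemma hausdorffMeasure_le_liminf_grid {k : ℝ} (hk : 0 ≤ k) {S : Set (E d)}
    {B : ∀ n, Set (Fin d → Fin (n + 1))} (hS : ∀ n, S ⊆ ⋃ q ∈ B n, gridCell n q) :
    μH[k] S ≤ liminf (fun n : ℕ ↦
      ∑ q, (B n).indicator (fun _ ↦ ENNReal.ofReal (√d / (n + 1)) ^ k) q) atTop := by
  classical
  have hmesh : Tendsto (fun n : ℕ ↦ ENNReal.ofReal (√d / (n + 1))) atTop (𝓝 0) := by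
    rw [← ENNReal.ofReal_zero]
    refine ENNReal.tendsto_ofReal ?_
    simpa [div_eq_mul_inv] using
      (tendsto_one_div_add_atTop_nhds_zero_nat (𝕜 := ℝ)).const_mul √d
  refine (Measure.hausdorffMeasure_le_liminf_sum (ι := fun n ↦ B n) k S _ hmesh
    (fun n q ↦ gridCell n q.1) (.of_forall fun n q ↦ ediam_gridCell_le n q.1)
    (.of_forall fun n ↦ (hS n).trans (biUnion_eq_iUnion _ _).subset)).trans ?_
  refine liminf_le_liminf (.of_forall fun n ↦ ?_)
  calc ∑ q : B n, Metric.ediam (gridCell n q.1) ^ k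
      ≤ ∑ _q : B n, ENNReal.ofReal (√d / (n + 1)) ^ k :=
        Finset.sum_le_sum fun q _ ↦ ENNReal.rpow_le_rpow (ediam_gridCell_le n q.1) hk
    _ = ∑ q, (B n).indicator (fun _ ↦ ENNReal.ofReal (√d / (n + 1)) ^ k) q := by
        simp only [indicator_apply, Finset.sum_ite, Finset.sum_const_zero, add_zero,
          Finset.sum_const, Finset.card_univ, Fintype.card_subtype]

end Grid

section Perturbation

lemma lintegral_sum_indicator_le {Ω β : Type*} [MeasurableSpace Ω] [Fintype β] {μ : Measure Ω}
    {S : β → Set Ω} (hS : ∀ q, MeasurableSet (S q)) {p : ℝ≥0∞} (hp : ∀ q, μ (S q) ≤ p)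
    (w : ℝ≥0∞) :
    ∫⁻ ω, ∑ q, (S q).indicator (fun _ ↦ w) ω ∂μ ≤ Fintype.card β * (w * p) := by
  calc ∫⁻ ω, ∑ q, (S q).indicator (fun _ ↦ w) ω ∂μ = ∑ q, w * μ (S q) := by
        rw [lintegral_finsetSum _ fun q _ ↦ measurable_const.indicator (hS q)]
        simp only [lintegral_indicator_const (hS _)]
    _ ≤ ∑ _q : β, w * p := by
        gcongr with q
        exact hp q
    _ = Fintype.card β * (w * p) := by simp

variable {ι κ : Type*} [Fintype ι] [Fintype κ] {d : ℕ}

lemma rank_lt_subset_iUnion_gridCell (hcard : Fintype.card ι ≤ Fintype.card κ)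
    {Q : E d → Matrix ι κ ℝ} {L : ℝ} (hL0 : 0 ≤ L)
    (hL : ∀ x ∈ unitCube d, ∀ y ∈ unitCube d, ∀ k l, |Q x k l - Q y k l| ≤ L * ∑ i, |x i - y i|)
    (A : ι × κ → ℝ) (n : ℕ) :
    {x ∈ openCube d | (Q x + Matrix.of (Function.curry A)).rank < Fintype.card ι} ⊆
      ⋃ q ∈ {q | A ∈ nearSingularShifts (Q (gridPoint n q))
        (Fintype.card ι * (L * (d / (n + 1))))}, gridCell n q := by
  rintro x ⟨hx, hrank⟩
  obtain ⟨q, hq⟩ := mem_iUnion.1 (openCube_subset_iUnion_gridCell n hx)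
  refine mem_biUnion (exists_mem_nearSingular_of_rank_lt hcard hrank fun k l ↦ ?_) hq
  rw [Matrix.add_apply, Matrix.add_apply, add_sub_add_right_eq_sub]
  exact (hL _ (gridPoint_mem_unitCube n q) x (openCube_subset_unitCube hx) k l).trans
    (mul_le_mul_of_nonneg_left (sum_abs_gridPoint_sub_le hq) hL0)

/-- The number of cells, times the weight of a cell, times the probability for a cell to meet the
rank-deficient set: the powers of the mesh cancel. -/
lemma card_mul_weight_mul_prob_eq (hd : 1 ≤ d) (p q : ℕ) (n : ℕ) {L a : ℝ} :
    (Fintype.card (Fin d → Fin (n + 1)) : ℝ≥0∞) * (ENNReal.ofReal (√d / (n + 1)) ^ ((d : ℝ) - 1) *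
      ENNReal.ofReal (p * q * (2 * q * (p * (L * (d / (n + 1)))) / a))) =
    ENNReal.ofReal (2 * p ^ 2 * q ^ 2 * √d ^ (d - 1) * d * L / a) := by
  obtain ⟨e, rfl⟩ := Nat.exists_eq_add_of_le' hd
  have hcard : (Fintype.card (Fin (e + 1) → Fin (n + 1)) : ℝ≥0∞) =
      ENNReal.ofReal (((n : ℝ) + 1) ^ (e + 1)) := by
    rw [← Nat.cast_succ, ← Nat.cast_pow, ENNReal.ofReal_natCast]
    simp
  rw [hcard, show ((e + 1 : ℕ) : ℝ) - 1 = (e : ℝ) by push_cast; ring, ENNReal.rpow_natCast,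
    ← ENNReal.ofReal_pow (by positivity), ← ENNReal.ofReal_mul (by positivity),
    ← ENNReal.ofReal_mul (by positivity), Nat.add_sub_cancel, div_pow]
  congr 1
  field_simp
  ring

lemma exists_hausdorffMeasure_rank_add_lt_le (hd : 1 ≤ d)
    (hcard : Fintype.card ι ≤ Fintype.card κ) {Q : E d → Matrix ι κ ℝ} {L a : ℝ} (hL0 : 0 ≤ L)
    (ha : 0 < a)
    (hL : ∀ x ∈ unitCube d, ∀ y ∈ unitCube d, ∀ k l, |Q x k l - Q y k l| ≤ L * ∑ i, |x i - y i|) :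
    ∃ A : ι × κ → ℝ, A ∈ Icc 0 (fun _ ↦ a) ∧
      μH[(d : ℝ) - 1] {x ∈ openCube d |
        (Q x + Matrix.of (Function.curry A)).rank < Fintype.card ι} ≤
      ENNReal.ofReal (2 * Fintype.card ι ^ 2 * Fintype.card κ ^ 2 * √d ^ (d - 1) * d * L / a) := by
  have := isProbabilityMeasure_unifBox (ι := ι × κ) ha
  let b (n : ℕ) : ℝ := Fintype.card ι * (L * (d / (n + 1)))
  let w (n : ℕ) : ℝ≥0∞ := ENNReal.ofReal (√d / (n + 1)) ^ ((d : ℝ) - 1)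
  let S (n : ℕ) (q : Fin d → Fin (n + 1)) : Set (ι × κ → ℝ) :=
    nearSingularShifts (Q (gridPoint n q)) (b n)
  have hS : ∀ n q, MeasurableSet (S n q) := fun n q ↦ measurableSet_nearSingularShifts _ _
  obtain ⟨A, hA, hliminf⟩ := exists_liminf_le_of_lintegral_le (μ := unifBox (ι × κ) a)
    (F := fun n A ↦ ∑ q, (S n q).indicator (fun _ ↦ w n) A)
    (fun n ↦ Finset.measurable_fun_sum _ fun q _ ↦ measurable_const.indicator (hS n q))
    (fun n ↦ (lintegral_sum_indicator_le (hS n)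
      (fun q ↦ unifBox_nearSingularShifts_le ha _ _) (w n)).trans
        (card_mul_weight_mul_prob_eq hd _ _ n).le)
    (ae_unifBox_mem a)
  have hd1 : (0 : ℝ) ≤ d - 1 := sub_nonneg.2 (mod_cast hd)
  exact ⟨A, hA, (hausdorffMeasure_le_liminf_grid hd1
    (rank_lt_subset_iUnion_gridCell hcard hL0 hL A)).trans hliminf⟩

end Perturbation

section CubeAverage

variable {ι G : Type*} [Fintype ι] [NormedAddCommGroup G]

lemma restrict_unifBox (a : ℝ) : (unifBox ι a).restrict (Icc 0 fun _ ↦ a) = unifBox ι a :=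
  Measure.restrict_eq_self_of_ae_mem (ae_unifBox_mem a)

lemma integrable_unifBox_of_continuous {a : ℝ} (ha : 0 < a) {g : (ι → ℝ) → G}
    (hg : Continuous g) : Integrable g (unifBox ι a) := by
  have := isProbabilityMeasure_unifBox (ι := ι) ha
  rw [← restrict_unifBox]
  exact hg.continuousOn.integrableOn_compact isCompact_Icc

lemma norm_sub_le_mul_sum_of_coord {s : ι → Set ℝ} {T : (ι → ℝ) → G} {C : ℝ}
    (hT : ∀ x ∈ univ.pi s, ∀ y ∈ univ.pi s, ∀ i, (∀ j ≠ i, x j = y j) →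
      ‖T x - T y‖ ≤ C * |x i - y i|)
    {x y : ι → ℝ} (hx : x ∈ univ.pi s) (hy : y ∈ univ.pi s) :
    ‖T x - T y‖ ≤ C * ∑ i, |x i - y i| := by
  classical
  suffices ∀ J : Finset ι, ‖T (J.piecewise x y) - T y‖ ≤ C * ∑ i ∈ J, |x i - y i| by
    simpa using this Finset.univ
  intro J
  induction J using Finset.induction_on with
  | empty => simp
  | insert i J hi ih =>
    have hmem : ∀ J : Finset ι, J.piecewise x y ∈ univ.pi s := fun J ↦
      J.piecewise_mem_set_pi hx hy
    have hstep := hT _ (hmem (insert i J)) _ (hmem J) i fun j hj ↦ by simp [hj]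
    rw [Finset.piecewise_insert_self, Finset.piecewise_eq_of_notMem _ _ _ hi] at hstep
    rw [Finset.sum_insert hi, mul_add]
    exact norm_sub_le_norm_sub_add_norm_sub _ _ _ |>.trans (add_le_add hstep ih)

variable [NormedSpace ℝ G]

lemma hasFDerivAt_setIntegral_of_continuous {V X : Type*} [NormedAddCommGroup V] [NormedSpace ℝ V]
    [LocallyCompactSpace V] [TopologicalSpace X] [MeasurableSpace X] [OpensMeasurableSpace X]
    [SecondCountableTopologyEither X G] [SecondCountableTopologyEither X (V →L[ℝ] G)]
    {μ : Measure X} [IsFiniteMeasureOnCompacts μ] {K : Set X} (hK : IsCompact K)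
    (hKm : MeasurableSet K) {F : V → X → G} {F' : V → X → V →L[ℝ] G} (hF : ∀ x, Continuous (F x))
    (hF' : Continuous F'.uncurry) (h : ∀ x y, HasFDerivAt (F · y) (F' x y) x) (x₀ : V) :
    HasFDerivAt (fun x ↦ ∫ y in K, F x y ∂μ) (∫ y in K, F' x₀ y ∂μ) x₀ := by
  obtain ⟨U, hU, hUx⟩ := exists_compact_mem_nhds x₀
  obtain ⟨C, hC⟩ := (hU.prod hK).exists_bound_of_continuousOn hF'.continuousOn
  exact hasFDerivAt_integral_of_dominated_of_fderiv_le hUx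
    (.of_forall fun x ↦ (hF x).aestronglyMeasurable)
    ((hF x₀).continuousOn.integrableOn_compact' hK hKm)
    (hF'.uncurry_left x₀).aestronglyMeasurable
    ((ae_restrict_mem hKm).mono fun y hy x hx ↦ hC (x, y) ⟨hx, hy⟩)
    (integrableOn_const hK.measure_ne_top)
    (.of_forall fun y x _ ↦ h x y)

lemma integral_unifBox_one_eq_integral_update [DecidableEq ι] (i : ι) {g : (ι → ℝ) → G}
    (hg : Continuous g) :
    ∫ u, g u ∂unifBox ι 1 = ∫ u, (∫ t in 0..1, g (Function.update u i t)) ∂unifBox ι 1 := by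
  have := isProbabilityMeasure_cond_Icc one_pos
  have hcond : volume[|Icc (0 : ℝ) 1] = volume.restrict (Icc 0 1) := by
    simp [ProbabilityTheory.cond]
  have hmp := measurePreserving_update_pi (fun _ : ι ↦ volume[|Icc (0 : ℝ) 1]) i
  have hint := hmp.integrable_comp_of_integrable (integrable_unifBox_of_continuous one_pos hg)
  rw [unifBox, ← hmp.map_eq, integral_map hmp.aemeasurable hg.aestronglyMeasurable]
  refine (integral_prod _ hint).trans ?_
  rw [hmp.map_eq, hcond]
  simp only [intervalIntegral.integral_of_le zero_le_one, integral_Icc_eq_integral_Ioc,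
    Function.comp_apply]

variable {d : ℕ}

/-- The average of `H` over the image of the unit cube under the homothety of ratio `1 - l` centred
at `x`. Unlike a convolution it only sees values of `H` in the cube when `x` lies in the cube. -/
def cubeAverage (H : E d → G) (l : ℝ) (x : E d) : G :=
  ∫ u, H (l • x + (1 - l) • toLp 2 u) ∂unifBox (Fin d) 1

lemma cubeAverage_eq_setIntegral (H : E d → G) (l : ℝ) (x : E d) :
    cubeAverage H l x = ∫ u in Icc 0 1, H (l • x + (1 - l) • toLp 2 u) ∂unifBox (Fin d) 1 := by
  rw [show (1 : Fin d → ℝ) = fun _ ↦ 1 from rfl, restrict_unifBox, cubeAverage]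

lemma continuous_cubeAverage {H : E d → G} (hH : Continuous H) (l : ℝ) :
    Continuous (cubeAverage H l) := by
  have := isProbabilityMeasure_unifBox (ι := Fin d) one_pos
  simp only [funext (cubeAverage_eq_setIntegral H l)]
  exact continuous_parametric_integral_of_continuous (by fun_prop) isCompact_Icc

lemma hasFDerivAt_cubeAverage {f : E d → G} (hf : ContDiff ℝ 1 f) (l : ℝ) (x : E d) :
    HasFDerivAt (cubeAverage f l) (l • cubeAverage (fderiv ℝ f) l x) x := by
  have := isProbabilityMeasure_unifBox (ι := Fin d) one_pos
  simp only [cubeAverage_eq_setIntegral, funext (cubeAverage_eq_setIntegral f l), ← integral_smul]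
  refine hasFDerivAt_setIntegral_of_continuous isCompact_Icc measurableSet_Icc
    (F' := fun x u ↦ l • fderiv ℝ f (l • x + (1 - l) • toLp 2 u))
    (fun x ↦ hf.continuous.comp (by fun_prop)) (by fun_prop) (fun y u ↦ ?_) x
  have haff : HasFDerivAt (fun z : E d ↦ l • z + (1 - l) • toLp 2 u)
      (l • ContinuousLinearMap.id ℝ (E d)) y := ((hasFDerivAt_id y).const_smul l).add_const _
  simpa [Function.comp_def] using (hf.differentiable one_ne_zero _).hasFDerivAt.comp y haff

lemma contDiff_cubeAverage {f : E d → G} (hf : ContDiff ℝ 1 f) (l : ℝ) :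
    ContDiff ℝ 1 (cubeAverage f l) := by
  refine contDiff_one_iff_fderiv.2
    ⟨fun x ↦ (hasFDerivAt_cubeAverage hf l x).differentiableAt, ?_⟩
  rw [funext fun x ↦ (hasFDerivAt_cubeAverage hf l x).fderiv]
  exact (continuous_cubeAverage (hf.continuous_fderiv one_ne_zero) l).const_smul l

lemma smul_add_smul_mem_unitCube {l : ℝ} (hl : l ∈ Icc 0 1) {x : E d} (hx : x ∈ unitCube d)
    {u : Fin d → ℝ} (hu : u ∈ Icc 0 1) : l • x + (1 - l) • toLp 2 u ∈ unitCube d :=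
  fun i ↦ convex_Icc 0 1 (hx i) ⟨hu.1 i, hu.2 i⟩ hl.1 (sub_nonneg.2 hl.2) (by ring)

lemma norm_sub_le_sqrt_of_mem_unitCube {x y : E d} (hx : x ∈ unitCube d) (hy : y ∈ unitCube d) :
    ‖x - y‖ ≤ √d := by
  have hcoord : ∀ i, |(x - y) i| ≤ 1 := fun i ↦
    (abs_sub_le_of_le_of_le (hx i).1 (hx i).2 (hy i).1 (hy i).2).trans (by simp)
  simpa using norm_le_sqrt_card_mul zero_le_one hcoord

lemma norm_cubeAverage_sub_le [CompleteSpace G] {H : E d → G} (hH : Continuous H) {r s : ℝ}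
    (hosc : ∀ x ∈ unitCube d, ∀ y ∈ unitCube d, ‖x - y‖ ≤ r → ‖H x - H y‖ ≤ s) {l : ℝ}
    (hl : l ∈ Icc 0 1) (hlr : (1 - l) * √d ≤ r) {x : E d} (hx : x ∈ unitCube d) :
    ‖cubeAverage H l x - H x‖ ≤ s := by
  have := isProbabilityMeasure_unifBox (ι := Fin d) one_pos
  rw [← mem_closedBall_iff_norm]
  refine (convex_closedBall (H x) s).integral_mem Metric.isClosed_closedBall ?_
    (integrable_unifBox_of_continuous one_pos (by fun_prop))
  filter_upwards [ae_unifBox_mem 1] with u hu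
  have hu' : toLp 2 u ∈ unitCube d := fun i ↦ ⟨hu.1 i, hu.2 i⟩
  rw [mem_closedBall_iff_norm]
  refine hosc _ (smul_add_smul_mem_unitCube hl hx hu) x hx (le_trans ?_ hlr)
  rw [show l • x + (1 - l) • toLp 2 u - x = (1 - l) • (toLp 2 u - x) by module, norm_smul,
    Real.norm_of_nonneg (sub_nonneg.2 hl.2)]
  exact mul_le_mul_of_nonneg_left (norm_sub_le_sqrt_of_mem_unitCube hu' hx) (sub_nonneg.2 hl.2)

/-- Moving the window `[a, a + θ]` to `[b, b + θ]` exchanges `∫ Φ` over `[a, b]` for its translate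
by `θ`. -/
lemma norm_integral_add_mul_sub_le {Φ : ℝ → G} (hΦ : Continuous Φ) {θ s a b : ℝ} (hθ : 0 < θ)
    (h : ∀ t ∈ uIcc a b, ‖Φ (t + θ) - Φ t‖ ≤ s) :
    ‖(∫ t in 0..1, Φ (a + θ * t)) - ∫ t in 0..1, Φ (b + θ * t)‖ ≤ s / θ * |a - b| := by
  have hwindow : ∀ c, ∫ t in 0..1, Φ (c + θ * t) = θ⁻¹ • ∫ t in c..c + θ, Φ t := fun c ↦ by
    simpa using intervalIntegral.integral_comp_add_mul (a := 0) (b := 1) Φ hθ.ne' c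
  have hint : ∀ p q, IntervalIntegrable Φ volume p q := hΦ.intervalIntegrable
  have hshift : (∫ t in a..a + θ, Φ t) - ∫ t in b..b + θ, Φ t =
      ∫ t in b..a, (Φ (t + θ) - Φ t) := by
    rw [intervalIntegral.integral_interval_sub_interval_comm' (hint _ _) (hint _ _) (hint _ _),
      intervalIntegral.integral_sub (Continuous.intervalIntegrable (by fun_prop) _ _) (hint _ _),
      intervalIntegral.integral_comp_add_right]
  rw [hwindow, hwindow, ← smul_sub, hshift, norm_smul, norm_inv, Real.norm_of_nonneg hθ.le]
  calc θ⁻¹ * ‖∫ t in b..a, (Φ (t + θ) - Φ t)‖ ≤ θ⁻¹ * (s * |a - b|) := by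
        gcongr
        exact intervalIntegral.norm_integral_le_of_norm_le_const fun t ht ↦
          h t (uIcc_comm b a ▸ uIoc_subset_uIcc ht)
    _ = s / θ * |a - b| := by ring

lemma toLp_update_mem_unitCube {w : Fin d → ℝ} (hw : toLp 2 w ∈ unitCube d) (i : Fin d) {τ : ℝ}
    (hτ : τ ∈ Icc 0 1) : toLp 2 (Function.update w i τ) ∈ unitCube d := by
  intro j
  rcases eq_or_ne j i with rfl | hj
  · simpa using hτ
  · simpa [hj] using hw j

lemma norm_toLp_update_sub_toLp_update (w : Fin d → ℝ) (i : Fin d) (p q : ℝ) :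
    ‖toLp 2 (Function.update w i p) - toLp 2 (Function.update w i q)‖ = |p - q| := by
  have hsingle : toLp 2 (Function.update w i p) - toLp 2 (Function.update w i q) =
      PiLp.single 2 i (p - q) := PiLp.ext fun j ↦ by
    rcases eq_or_ne j i with rfl | hj
    · simp
    · simp [hj]
  rw [hsingle, PiLp.norm_single, Real.norm_eq_abs]

lemma norm_integral_update_sub_le {H : E d → G} (hH : Continuous H) {r s : ℝ}
    (hosc : ∀ x ∈ unitCube d, ∀ y ∈ unitCube d, ‖x - y‖ ≤ r → ‖H x - H y‖ ≤ s) {l : ℝ}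
    (hl : l ∈ Ico 0 1) (hlr : 1 - l ≤ r) {x y : E d} (hx : x ∈ unitCube d) (hy : y ∈ unitCube d)
    {i : Fin d} (hxy : ∀ j ≠ i, x j = y j) {u : Fin d → ℝ} (hu : u ∈ Icc 0 1) :
    ‖∫ t in 0..1, (H (l • x + (1 - l) • toLp 2 (Function.update u i t)) -
      H (l • y + (1 - l) • toLp 2 (Function.update u i t)))‖ ≤ s * l / (1 - l) * |x i - y i| := by
  have hθ : 0 < 1 - l := sub_pos.2 hl.2
  let w : Fin d → ℝ := l • ofLp x + (1 - l) • u
  let Φ : ℝ → G := fun τ ↦ H (toLp 2 (Function.update w i τ))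
  have hw : toLp 2 w ∈ unitCube d := smul_add_smul_mem_unitCube (Ico_subset_Icc_self hl) hx hu
  have hΦ : Continuous Φ := by fun_prop
  have heq : ∀ z : E d, (∀ j ≠ i, x j = z j) → ∀ t,
      H (l • z + (1 - l) • toLp 2 (Function.update u i t)) = Φ (l * z i + (1 - l) * t) :=
    fun z hz t ↦ congrArg H <| PiLp.ext fun j ↦ by
      rcases eq_or_ne j i with rfl | hj
      · simp
      · simp [w, hj, hz j hj]
  have hstep : ∀ t ∈ uIcc (l * x i) (l * y i), ‖Φ (t + (1 - l)) - Φ t‖ ≤ s := fun t ht ↦ by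
    have htl : t ∈ Icc 0 l := uIcc_subset_Icc
      ⟨mul_nonneg hl.1 (hx i).1, mul_le_of_le_one_right hl.1 (hx i).2⟩
      ⟨mul_nonneg hl.1 (hy i).1, mul_le_of_le_one_right hl.1 (hy i).2⟩ ht
    refine hosc _ (toLp_update_mem_unitCube hw i ⟨?_, ?_⟩) _
      (toLp_update_mem_unitCube hw i ⟨htl.1, htl.2.trans hl.2.le⟩) ?_
    · linarith [htl.1]
    · linarith [htl.2]
    · rwa [norm_toLp_update_sub_toLp_update, add_sub_cancel_left, abs_of_pos hθ]
  simp only [heq x fun _ _ ↦ rfl, heq y hxy]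
  rw [intervalIntegral.integral_sub (Continuous.intervalIntegrable (by fun_prop) _ _)
    (Continuous.intervalIntegrable (by fun_prop) _ _)]
  refine (norm_integral_add_mul_sub_le hΦ hθ hstep).trans_eq ?_
  rw [← mul_sub, abs_mul, abs_of_nonneg hl.1]
  ring

lemma norm_cubeAverage_sub_cubeAverage_le {H : E d → G} (hH : Continuous H) {r s : ℝ}
    (hosc : ∀ x ∈ unitCube d, ∀ y ∈ unitCube d, ‖x - y‖ ≤ r → ‖H x - H y‖ ≤ s) {l : ℝ}
    (hl : l ∈ Ico 0 1) (hlr : 1 - l ≤ r) {x y : E d} (hx : x ∈ unitCube d) (hy : y ∈ unitCube d)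
    {i : Fin d} (hxy : ∀ j ≠ i, x j = y j) :
    ‖cubeAverage H l x - cubeAverage H l y‖ ≤ s * l / (1 - l) * |x i - y i| := by
  have := isProbabilityMeasure_unifBox (ι := Fin d) one_pos
  have hint : ∀ z : E d,
      Integrable (fun u ↦ H (l • z + (1 - l) • toLp 2 u)) (unifBox (Fin d) 1) :=
    fun z ↦ integrable_unifBox_of_continuous one_pos (by fun_prop)
  rw [cubeAverage, cubeAverage, ← integral_sub (hint x) (hint y),
    integral_unifBox_one_eq_integral_update i (by fun_prop)]
  refine (norm_integral_le_of_norm_le_const (μ := unifBox (Fin d) 1)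
    (C := s * l / (1 - l) * |x i - y i|) ?_).trans
    (by simp)
  filter_upwards [ae_unifBox_mem 1] with u hu
  exact norm_integral_update_sub_le hH hosc hl hlr hx hy hxy hu

lemma exists_contDiff_fderiv_lipschitz [CompleteSpace G] {f : E d → G} (hd : 1 ≤ d)
    (hf : ContDiff ℝ 1 f) {r s : ℝ} (hr : 0 < r)
    (hosc : ∀ x ∈ unitCube d, ∀ y ∈ unitCube d, ‖x - y‖ ≤ r →
      ‖fderiv ℝ f x - fderiv ℝ f y‖ ≤ s) :
    ∃ g : E d → G, ContDiff ℝ 1 g ∧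
      (∀ x ∈ unitCube d, ‖fderiv ℝ g x - fderiv ℝ f x‖ ≤ s) ∧
      ∀ x ∈ unitCube d, ∀ y ∈ unitCube d,
        ‖fderiv ℝ g x - fderiv ℝ g y‖ ≤ s * √d / r * ∑ i, |x i - y i| := by
  have hf' := hf.continuous_fderiv one_ne_zero
  have hd1 : 1 ≤ √(d : ℝ) := Real.one_le_sqrt.2 (mod_cast hd)
  have hpos : 0 < r + √d := by positivity
  obtain ⟨l, hl⟩ : ∃ l, l = √d / (r + √d) := ⟨_, rfl⟩
  have hl0 : 0 < l := by rw [hl]; positivity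
  have hl1 : 1 - l = r / (r + √d) := by rw [hl]; field_simp; ring
  have hl1' : 0 < 1 - l := by rw [hl1]; positivity
  have hratio : s * l / (1 - l) = s * √d / r := by rw [hl1, hl]; field_simp
  have hlr : (1 - l) * √d ≤ r := by
    rw [hl1, div_mul_eq_mul_div, div_le_iff₀ hpos]
    nlinarith
  have hfderiv : ∀ x, fderiv ℝ (fun x ↦ l⁻¹ • cubeAverage f l x) x =
      cubeAverage (fderiv ℝ f) l x := fun x ↦ by
    rw [fderiv_fun_const_smul (hasFDerivAt_cubeAverage hf l x).differentiableAt,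
      (hasFDerivAt_cubeAverage hf l x).fderiv, inv_smul_smul₀ hl0.ne']
  refine ⟨fun x ↦ l⁻¹ • cubeAverage f l x, (contDiff_cubeAverage hf l).const_smul _,
    fun x hx ↦ ?_, fun x hx y hy ↦ ?_⟩
  · rw [hfderiv]
    exact norm_cubeAverage_sub_le hf' hosc ⟨hl0.le, (sub_pos.1 hl1').le⟩ hlr hx
  · rw [hfderiv, hfderiv, ← hratio]
    exact norm_sub_le_mul_sum_of_coord (s := fun _ ↦ Icc 0 1)
      (T := fun z ↦ cubeAverage (fderiv ℝ f) l (toLp 2 z))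
      (fun x hx y hy i hxy ↦ norm_cubeAverage_sub_cubeAverage_le hf' hosc
        ⟨hl0.le, sub_pos.1 hl1'⟩ ((le_mul_of_one_le_right hl1'.le hd1).trans hlr)
        (fun i ↦ hx i trivial) (fun i ↦ hy i trivial) hxy)
      (fun i _ ↦ hx i) fun i _ ↦ hy i

end CubeAverage

section Jacobian

variable {d m : ℕ}

lemma norm_toEuclideanLin_le {ι κ : Type*} [Fintype ι] [Fintype κ] [DecidableEq κ]
    {M : Matrix ι κ ℝ} {a : ℝ} (ha : 0 ≤ a) (hM : ∀ k l, |M k l| ≤ a) :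
    ‖(Matrix.toEuclideanLin M).toContinuousLinearMap‖ ≤
      √(Fintype.card ι) * (√(Fintype.card κ) * a) := by
  refine ContinuousLinearMap.opNorm_le_bound _ (by positivity) fun x ↦ ?_
  rw [mul_assoc]
  refine norm_le_sqrt_card_mul (by positivity) fun k ↦ ?_
  have hinner : Matrix.toEuclideanLin M x k = inner ℝ x (toLp 2 (M k)) := by
    simp [Matrix.mulVec, EuclideanSpace.inner_eq_star_dotProduct]
  calc |Matrix.toEuclideanLin M x k| ≤ ‖x‖ * ‖(toLp 2 (M k) : EuclideanSpace ℝ κ)‖ :=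
        hinner ▸ abs_real_inner_le_norm _ _
    _ ≤ ‖x‖ * (√(Fintype.card κ) * a) := by
        gcongr
        exact norm_le_sqrt_card_mul ha (hM k)
    _ = √(Fintype.card κ) * a * ‖x‖ := mul_comm _ _

lemma abs_jac_sub_le (g : E d → E m) (x y : E d) (k : Fin m) (l : Fin d) :
    |jac g x k l - jac g y k l| ≤ ‖fderiv ℝ g x - fderiv ℝ g y‖ := by
  calc |jac g x k l - jac g y k l|
      = ‖(fderiv ℝ g x - fderiv ℝ g y) (EuclideanSpace.single l 1) k‖ := by simp [jac]
    _ ≤ ‖(fderiv ℝ g x - fderiv ℝ g y) (EuclideanSpace.single l 1)‖ := PiLp.norm_apply_le _ k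
    _ ≤ ‖fderiv ℝ g x - fderiv ℝ g y‖ := by
        simpa using (fderiv ℝ g x - fderiv ℝ g y).le_opNorm (EuclideanSpace.single l 1)

lemma jac_eq_add {g G : E d → E m} {M : Matrix (Fin m) (Fin d) ℝ} {x : E d}
    (h : fderiv ℝ G x = fderiv ℝ g x + (Matrix.toEuclideanLin M).toContinuousLinearMap) :
    jac G x = jac g x + M := by
  ext k l
  simp [jac, h]

lemma critSet_eq_of_jac_eq (hm : 1 ≤ m) {g : E d → E m} {Q : E d → Matrix (Fin m) (Fin d) ℝ}
    (h : ∀ x, jac g x = Q x) :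
    critSet g = {x ∈ openCube d | (Q x).rank < Fintype.card (Fin m)} := by
  simp only [critSet, h, Fintype.card_fin, Nat.le_sub_one_iff_lt hm]

end Jacobian

section Approximation

variable {d m : ℕ}

lemma zero_mem_unitCube : (0 : E d) ∈ unitCube d := fun _ ↦ by simp

lemma convex_unitCube : Convex ℝ (unitCube d) := fun _ hx _ hy _ _ ha hb hab i ↦
  convex_Icc 0 1 (hx i) (hy i) ha hb hab

lemma norm_sub_le_sqrt_mul_of_fderiv {G : Type*} [NormedAddCommGroup G] [NormedSpace ℝ G]
    {f g : E d → G} (hf : Differentiable ℝ f) (hg : Differentiable ℝ g) {K : ℝ} (hfg : g 0 = f 0)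
    (hK : ∀ x ∈ unitCube d, ‖fderiv ℝ g x - fderiv ℝ f x‖ ≤ K) {x : E d} (hx : x ∈ unitCube d) :
    ‖g x - f x‖ ≤ √d * K := by
  have hK0 : 0 ≤ K := (norm_nonneg _).trans (hK x hx)
  calc ‖g x - f x‖ = ‖(g - f) x - (g - f) 0‖ := by simp [hfg]
    _ ≤ K * ‖x - 0‖ := convex_unitCube.norm_image_sub_le_of_norm_hasFDerivWithin_le
        (fun y _ ↦ ((hg y).hasFDerivAt.sub (hf y).hasFDerivAt).hasFDerivWithinAt) hK
        zero_mem_unitCube hx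
    _ ≤ K * √d := by
        gcongr
        exact norm_sub_le_sqrt_of_mem_unitCube hx zero_mem_unitCube
    _ = √d * K := mul_comm _ _

lemma Nf_le_hausdorffMeasure_critSet (hd : 1 ≤ d) {f g : E d → E m} (hf : ContDiff ℝ 1 f)
    (hg : ContDiff ℝ 1 g) (hfg : g 0 = f 0) {K ε : ℝ} (hKε : √d * K ≤ ε)
    (hK : ∀ x ∈ unitCube d, ‖fderiv ℝ g x - fderiv ℝ f x‖ ≤ K) :
    Nf f ε ≤ μH[(d : ℝ) - 1] (critSet g) := by
  have hd1 : 1 ≤ √(d : ℝ) := Real.one_le_sqrt.2 (mod_cast hd)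
  refine sInf_le ⟨g, hg, fun x hx ↦ ⟨?_, ?_⟩, rfl⟩
  · exact (norm_sub_le_sqrt_mul_of_fderiv (hf.differentiable one_ne_zero)
      (hg.differentiable one_ne_zero) hfg hK hx).trans hKε
  · exact (hK x hx).trans ((le_mul_of_one_le_left ((norm_nonneg _).trans (hK x hx)) hd1).trans hKε)

lemma Nf_le_of_fderiv_lipschitz (hm : 1 ≤ m) (hmd : m ≤ d) {f g : E d → E m}
    (hf : ContDiff ℝ 1 f) (hg : ContDiff ℝ 1 g) {s L a ε : ℝ} (hL0 : 0 ≤ L) (ha : 0 < a)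
    (hgf : ∀ x ∈ unitCube d, ‖fderiv ℝ g x - fderiv ℝ f x‖ ≤ s)
    (hL : ∀ x ∈ unitCube d, ∀ y ∈ unitCube d,
      ‖fderiv ℝ g x - fderiv ℝ g y‖ ≤ L * ∑ i, |x i - y i|)
    (hε : √d * (s + √m * (√d * a)) ≤ ε) :
    Nf f ε ≤ ENNReal.ofReal (2 * m ^ 2 * d ^ 2 * √d ^ (d - 1) * d * L / a) := by
  have hd : 1 ≤ d := hm.trans hmd
  obtain ⟨A, hA, hμ⟩ := exists_hausdorffMeasure_rank_add_lt_le (Q := jac g) hd (by simpa) hL0 ha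
    fun x hx y hy k l ↦ (abs_jac_sub_le g x y k l).trans (hL x hx y hy)
  let M : Matrix (Fin m) (Fin d) ℝ := Matrix.of (Function.curry A)
  let T : E d →L[ℝ] E m := (Matrix.toEuclideanLin M).toContinuousLinearMap
  have hT : ‖T‖ ≤ √m * (√d * a) := by
    simpa using norm_toEuclideanLin_le (M := M) ha.le fun k l ↦
      (abs_of_nonneg (hA.1 (k, l))).trans_le (hA.2 (k, l))
  let G : E d → E m := fun x ↦ g x + T x + (f 0 - g 0)
  have hG : ContDiff ℝ 1 G := (hg.add T.contDiff).add contDiff_const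
  have hG' : ∀ x, fderiv ℝ G x = fderiv ℝ g x + T := fun x ↦
    (((hg.differentiable one_ne_zero x).hasFDerivAt.add T.hasFDerivAt).add_const _).fderiv
  have hGf : ∀ x ∈ unitCube d, ‖fderiv ℝ G x - fderiv ℝ f x‖ ≤ s + √m * (√d * a) := fun x hx ↦ by
    rw [hG', add_sub_right_comm]
    exact norm_add_le_of_le (hgf x hx) hT
  calc Nf f ε ≤ μH[(d : ℝ) - 1] (critSet G) :=
        Nf_le_hausdorffMeasure_critSet hd hf hG (by simp [G]) hε hGf
    _ ≤ ENNReal.ofReal (2 * m ^ 2 * d ^ 2 * √d ^ (d - 1) * d * L / a) := by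
        rw [critSet_eq_of_jac_eq hm fun x ↦ jac_eq_add (hG' x)]
        simpa only [Fintype.card_fin] using hμ

lemma Nf_le_of_oscillation (hm : 1 ≤ m) (hmd : m ≤ d) {f : E d → E m} (hf : ContDiff ℝ 1 f)
    {r s ε : ℝ} (hr : 0 < r) (hs : 0 < s)
    (hosc : ∀ x ∈ unitCube d, ∀ y ∈ unitCube d, ‖x - y‖ ≤ r →
      ‖fderiv ℝ f x - fderiv ℝ f y‖ ≤ s)
    (hε : √d * (s + √m * (√d * (2 * m ^ 2 * d ^ 2 * √d ^ (d - 1) * s))) ≤ ε) :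
    Nf f ε ≤ ENNReal.ofReal (d * √d / r) := by
  have hd : 1 ≤ d := hm.trans hmd
  obtain ⟨g, hg, hgf, hL⟩ := exists_contDiff_fderiv_lipschitz hd hf hr hosc
  convert! Nf_le_of_fderiv_lipschitz hm hmd hf hg (by positivity) (by positivity) hgf hL hε using 2
  field_simp

end Approximation

lemma sqrt_mul_le_gamma_mul {d m : ℕ} (hd : 1 ≤ d) (hmd : m ≤ d) {s : ℝ} (hs : 0 ≤ s) :
    √d * (s + √m * (√d * (2 * m ^ 2 * d ^ 2 * √d ^ (d - 1) * s))) ≤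
      (2 + 4 * (d : ℝ) ^ ((d : ℝ) + 1 / 2) * ((d : ℝ) + 1) ^ 4) * s := by
  obtain ⟨e, rfl⟩ := Nat.exists_eq_add_of_le' hd
  set D : ℝ := ((e + 1 : ℕ) : ℝ) with hD
  have hD1 : 1 ≤ D := Nat.one_le_cast.2 hd
  have hmD : (m : ℝ) ≤ D := Nat.cast_le.2 hmd
  have hpow : D ^ (D + 1 / 2) = D ^ e * D * √D := by
    rw [Real.rpow_add (by positivity), hD, Real.rpow_natCast, ← Real.sqrt_eq_rpow, pow_succ]
  have hsqrt : √D ≤ D := Real.sqrt_le_self_iff.2 (.inr hD1)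
  have hroot : √m * √D ≤ D := by
    calc √m * √D ≤ √D * √D := by gcongr
      _ = D := Real.mul_self_sqrt (by positivity)
  calc √D * (s + √m * (√D * (2 * m ^ 2 * D ^ 2 * √D ^ (e + 1 - 1) * s)))
      = √D * (1 + 2 * (√m * √D) * m ^ 2 * D ^ 2 * √D ^ e) * s := by
        rw [Nat.add_sub_cancel]
        ring
    _ ≤ √D * (1 + 2 * D * D ^ 2 * D ^ 2 * D ^ e) * s := by gcongr
    _ = √D * (1 + 2 * (D ^ e * D) * D ^ 4) * s := by ring
    _ ≤ √D * ((D ^ e * D) * (D + 1) ^ 4 + 2 * (D ^ e * D) * (D + 1) ^ 4) * s := by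
        gcongr
        · exact one_le_mul_of_one_le_of_one_le
            (one_le_mul_of_one_le_of_one_le (one_le_pow₀ hD1) hD1) (one_le_pow₀ (by linarith))
        · linarith
    _ ≤ (2 + 4 * D ^ (D + 1 / 2) * (D + 1) ^ 4) * s := by
        have h0 : 0 ≤ D ^ e * D * √D * (D + 1) ^ 4 := by positivity
        rw [hpow]
        gcongr
        linarith

lemma le_div_PsiInv {X Y : Type*} [PseudoMetricSpace X] [PseudoMetricSpace Y] {h : X → Y}
    {U : Set X} {s C : ℝ} (hC : 0 < C) {N : ℝ≥0∞}
    (hN : ∀ r > 0, (∀ x ∈ U, ∀ y ∈ U, dist x y ≤ r → dist (h x) (h y) ≤ s) →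
      N ≤ ENNReal.ofReal (C / r)) :
    N ≤ ENNReal.ofReal C / PsiInv h U s := by
  rw [ENNReal.le_div_iff_mul_le (.inr (by simpa using hC)) (.inr ENNReal.ofReal_ne_top)]
  refine ENNReal.mul_le_of_forall_lt fun u hu v hv ↦ ?_
  rcases eq_or_ne v 0 with rfl | hv0
  · simp
  obtain ⟨δ, hδ, hvδ⟩ := lt_sSup_iff.1 hv
  have hvr : 0 < v.toReal := ENNReal.toReal_pos hv0 hv.ne_top
  have hosc : ∀ x ∈ U, ∀ y ∈ U, dist x y ≤ v.toReal → dist (h x) (h y) ≤ s :=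
    fun x hx y hy hxy ↦ hδ x hx y hy <| by
      rw [edist_dist]
      exact (ENNReal.ofReal_le_of_le_toReal hxy).trans hvδ.le
  calc u * v ≤ ENNReal.ofReal (C / v.toReal) * v := by
        gcongr
        exact hu.le.trans (hN _ hvr hosc)
    _ = ENNReal.ofReal C := by
        rw [ENNReal.ofReal_div_of_pos hvr, ENNReal.ofReal_toReal hv.ne_top,
          ENNReal.div_mul_cancel hv0 hv.ne_top]

theorem statement3_general {d m : ℕ} (hm : 1 ≤ m) (hmd : m ≤ d) {f : E d → E m}
    (hf : ContDiff ℝ 1 f) {γ : ℝ}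
    (hγ : γ = 2 + 4 * (d : ℝ) ^ ((d : ℝ) + 1 / 2) * ((d : ℝ) + 1) ^ 4) {ε : ℝ} (hε : 0 < ε) :
    Nf f ε ≤ ENNReal.ofReal ((d : ℝ) ^ ((3 : ℝ) / 2)) /
      PsiInv (fderiv ℝ f) (unitCube d) (ε / γ) := by
  have hd : 1 ≤ d := hm.trans hmd
  have hγ0 : 0 < γ := by rw [hγ]; positivity
  have hC : (d : ℝ) ^ ((3 : ℝ) / 2) = d * √d := by
    rw [Real.sqrt_eq_rpow, ← Real.rpow_one_add' (by positivity) (by norm_num)]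
    norm_num
  rw [hC]
  refine le_div_PsiInv (by positivity) fun r hr hosc ↦
    Nf_le_of_oscillation hm hmd hf hr (div_pos hε hγ0) (by simpa only [dist_eq_norm] using hosc) ?_
  calc _ ≤ γ * (ε / γ) := hγ ▸ sqrt_mul_le_gamma_mul hd hmd (by positivity)
    _ = ε := mul_div_cancel₀ ε hγ0.ne'

end

/-- upper bound on `N_f(ε)` in terms of `Ψ_{Df}`.  The condition
"`ε > 0` small enough that `β_f⁻¹(ε) ≤ 1/√d`" is expressed through the
witness `δ = β_f⁻¹(ε)`, i.e. `β_f(δ) = ε`. -/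
theorem statement3 (d m : ℕ) (hm : 1 ≤ m) (hmd : m ≤ d)
    (f : E d → E m) (hf : ContDiff ℝ 1 f)
    (hnc : ¬ ∀ x ∈ unitCube d, ∀ y ∈ unitCube d, f x = f y)
    (γ : ℝ) (hγ : γ = 2 + 4 * (d:ℝ) ^ ((d:ℝ) + 1/2) * ((d:ℝ)+1)^4)
    (ε : ℝ) (hε : 0 < ε) (δ : ℝ) (hδ : 0 < δ) (hβ : betaf f δ = ε)
    (hsmall : δ ≤ 1 / Real.sqrt d) :
    Nf f ε ≤ ENNReal.ofReal ((d:ℝ) ^ ((3:ℝ)/2) * 2 ^ (3*d - 1) * (d.factorial : ℝ)) /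
      PsiInv (fderiv ℝ f) (unitCube d) (ε / γ) := by
  refine (statement3_general hm hmd hf hγ hε).trans ?_
  gcongr
  exact mul_assoc (_ : ℝ) _ _ ▸ le_mul_of_one_le_right (by positivity)
    (mod_cast Nat.mul_pos (by simp) d.factorial_pos)

end
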